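/- arXiv:2304.02395 — 2 statements merged into one kernel-verified Lean document; each statement's English description precedes it below -/
import Mathlib

section
/- Let P be a symmetric positive definite n×n real matrix, W a symmetric positive definite p×p real matrix, A an n×n real matrix, B an n×p real matrix, and a ∈ (0,1). If the symmetric block matrix M = [[aP, AᵀP, 0], [PA, P, PB], [0, BᵀP, W]] is positive semidefinite, then the block matrix [[aP, 0], [0, W]] − [A B]ᵀ P [A B] is positive semidefinite, i.e., for all ζ ∈ ℝⁿ and ω ∈ ℝᵖ: (Aζ + Bω)ᵀ P (Aζ + Bω) ≤ a ζᵀ P ζ + ωᵀ W ω. -/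
open Matrix

/-!
With `C = [A B]` and `D = diag(aP, W)`, exchanging the last two blocks turns the 3×3 matrix into
`[[D, CᴴP], [PC, P]]`. Its quadratic form at `(x, -Cx)`, the minimizer in the second variable, is
that of `D - CᴴPC`, so the Schur complement is obtained by a congruence.
-/

/-- The exchange of the last two summands of a threefold sum, used to reorder the blocks of a 3×3
block matrix. -/
def sumRightComm (l m n : Type*) : (l ⊕ m) ⊕ n ≃ (l ⊕ n) ⊕ m :=
  (Equiv.sumAssoc l m n).trans
    ((Equiv.sumCongr (Equiv.refl l) (Equiv.sumComm m n)).trans (Equiv.sumAssoc l n m).symm)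

theorem fromBlocks_fromBlocks_submatrix_sumRightComm {R l m n l' m' n' : Type*}
    (M₁₁ : Matrix l l' R) (M₁₂ : Matrix l n' R) (M₁₃ : Matrix l m' R)
    (M₂₁ : Matrix n l' R) (M₂₂ : Matrix n n' R) (M₂₃ : Matrix n m' R)
    (M₃₁ : Matrix m l' R) (M₃₂ : Matrix m n' R) (M₃₃ : Matrix m m' R) :
    (fromBlocks (fromBlocks M₁₁ M₁₂ M₂₁ M₂₂) (fromRows M₁₃ M₂₃)
        (fromCols M₃₁ M₃₂) M₃₃).submatrix (sumRightComm l m n) (sumRightComm l' m' n') =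
      fromBlocks (fromBlocks M₁₁ M₁₃ M₃₁ M₃₃) (fromRows M₁₂ M₃₂)
        (fromCols M₂₁ M₂₃) M₂₂ := by
  ext ((_ | _) | _) ((_ | _) | _) <;> rfl

section SchurComplement

variable {R k l m n : Type*} [Ring R] [StarRing R] [Fintype n]

theorem conjTranspose_mul_fromBlocks_mul_fromRows_one_neg [Fintype k] [DecidableEq k]
    (D : Matrix k k R) (P : Matrix n n R) (C : Matrix n k R) :
    (fromRows (1 : Matrix k k R) (-C))ᴴ * fromBlocks D (Cᴴ * P) (P * C) P *
      fromRows (1 : Matrix k k R) (-C) = D - Cᴴ * P * C := by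
  simp [conjTranspose_fromRows_eq_fromCols_conjTranspose, fromCols_mul_fromBlocks,
    fromCols_mul_fromRows, sub_eq_add_neg, Matrix.mul_assoc]

variable [PartialOrder R]

theorem posSemidef_sub_of_posSemidef_fromBlocks [Finite k]
    {D : Matrix k k R} {P : Matrix n n R} {C : Matrix n k R}
    (h : (fromBlocks D (Cᴴ * P) (P * C) P).PosSemidef) : (D - Cᴴ * P * C).PosSemidef := by
  classical
  have := Fintype.ofFinite k
  rw [← conjTranspose_mul_fromBlocks_mul_fromRows_one_neg]
  exact h.conjTranspose_mul_mul_same _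

theorem dotProduct_mulVec_le_of_posSemidef_sub [IsOrderedAddMonoid R] [Fintype k]
    {D : Matrix k k R} {P : Matrix n n R} {C : Matrix n k R}
    (h : (D - Cᴴ * P * C).PosSemidef) (x : k → R) :
    star (C *ᵥ x) ⬝ᵥ (P *ᵥ (C *ᵥ x)) ≤ star x ⬝ᵥ (D *ᵥ x) := by
  have pullback : star x ⬝ᵥ ((Cᴴ * P * C) *ᵥ x) = star (C *ᵥ x) ⬝ᵥ (P *ᵥ (C *ᵥ x)) := by
    simp only [star_mulVec, ← dotProduct_mulVec, mulVec_mulVec, Matrix.mul_assoc]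
  rw [← pullback, ← sub_nonneg, ← dotProduct_sub, ← sub_mulVec]
  exact h.dotProduct_mulVec_nonneg x

theorem lmi_schur_reduction_general [IsOrderedAddMonoid R] [Fintype l] [Fintype m]
    {Q : Matrix l l R} {W : Matrix m m R} {P : Matrix n n R} {A : Matrix n l R} {B : Matrix n m R}
    (hM : (fromBlocks (fromBlocks Q (Aᴴ * P) (P * A) P) (fromRows 0 (P * B))
      (fromCols 0 (Bᴴ * P)) W).PosSemidef) :
    (fromBlocks Q 0 0 W - (fromCols A B)ᴴ * P * fromCols A B).PosSemidef ∧
    ∀ (ζ : l → R) (ω : m → R),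
      star (A *ᵥ ζ + B *ᵥ ω) ⬝ᵥ (P *ᵥ (A *ᵥ ζ + B *ᵥ ω)) ≤
        star ζ ⬝ᵥ (Q *ᵥ ζ) + star ω ⬝ᵥ (W *ᵥ ω) := by
  have reordered : (fromBlocks (fromBlocks Q 0 0 W) ((fromCols A B)ᴴ * P)
      (P * fromCols A B) P).PosSemidef := by
    rw [conjTranspose_fromCols_eq_fromRows_conjTranspose, fromRows_mul, mul_fromCols,
      ← fromBlocks_fromBlocks_submatrix_sumRightComm]
    exact hM.submatrix _
  have schur := posSemidef_sub_of_posSemidef_fromBlocks reordered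
  refine ⟨schur, fun ζ ω ↦ ?_⟩
  simpa [fromBlocks_mulVec, fromCols_mulVec, Function.star_sumElim] using
    dotProduct_mulVec_le_of_posSemidef_sub schur (Sum.elim ζ ω)

end SchurComplement

/-- **Schur-complement reduction of the 3×3 block LMI.** If
`M = [[aP, AᵀP, 0], [PA, P, PB], [0, BᵀP, W]]` is positive semidefinite (with `P, W`
symmetric positive definite and `a ∈ (0,1)`), then
`[[aP, 0], [0, W]] - [A B]ᵀ P [A B] ≥ 0`, i.e. for all `ζ, ω` we have
`(Aζ + Bω)ᵀ P (Aζ + Bω) ≤ a ζᵀ P ζ + ωᵀ W ω`. -/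
theorem lmi_schur_reduction (n p : ℕ)
    (P : Matrix (Fin n) (Fin n) ℝ) (W : Matrix (Fin p) (Fin p) ℝ)
    (A : Matrix (Fin n) (Fin n) ℝ) (B : Matrix (Fin n) (Fin p) ℝ)
    (a : ℝ) (ha : a ∈ Set.Ioo (0 : ℝ) 1)
    (hP : P.PosDef) (hW : W.PosDef)
    (hM : (Matrix.fromBlocks
        (Matrix.fromBlocks (a • P) (Aᵀ * P) (P * A) P)
        (Matrix.fromRows (0 : Matrix (Fin n) (Fin p) ℝ) (P * B))
        (Matrix.fromCols (0 : Matrix (Fin p) (Fin n) ℝ) (Bᵀ * P))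
        W).PosSemidef) :
    ((Matrix.fromBlocks (a • P) 0 0 W)
        - (Matrix.fromCols A B)ᵀ * P * (Matrix.fromCols A B)).PosSemidef ∧
    ∀ (ζ : Fin n → ℝ) (ω : Fin p → ℝ),
      (A *ᵥ ζ + B *ᵥ ω) ⬝ᵥ (P *ᵥ (A *ᵥ ζ + B *ᵥ ω)) ≤
        a * (ζ ⬝ᵥ (P *ᵥ ζ)) + ω ⬝ᵥ (W *ᵥ ω) := by
  simpa only [conjTranspose_eq_transpose_of_trivial, star_trivial, smul_mulVec, dotProduct_smul,
    smul_eq_mul] using lmi_schur_reduction_general (Q := a • P) (A := A) (B := B) hM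
end

section
/- (Invariance of the ellipsoidal bound) Let n, p₁, …, p_N be positive naturals with N ≥ 1, let A be an n×n real matrix, Bᵢ an n×pᵢ real matrix, and Wᵢ a symmetric positive definite pᵢ×pᵢ matrix for each i = 1, …, N. Let a ∈ (0,1), a₁, …, a_N ∈ (0,1) with a₁ + … + a_N ≥ a, and let P be a symmetric positive definite n×n matrix. Set B = [B₁ … B_N] (horizontal concatenation) and W_a = diag[(1−a₁)W₁, …, (1−a_N)W_N]. Suppose the block matrix [[aP, AᵀP, 0], [PA, P, PB], [0, BᵀP, W_a]] is positive semidefinite. Then any solution ζ : ℕ → ℝⁿ of ζ(k+1) = A ζ(k) + Σᵢ Bᵢ ωᵢ(k), where for each k the disturbances satisfy ωᵢ(k)ᵀ Wᵢ ωᵢ(k) ≤ 1, satisfies ζ(k)ᵀ P ζ(k) ≤ a^{k−1} ζ(1)ᵀ P ζ(1) + (N − a)(1 − a^{k−1})/(1 − a) for all k ≥ 1. -/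
open Matrix

/-!
Evaluating the quadratic form of the block matrix at `(x, -(A x + B w), w)` makes the off-diagonal
blocks collapse, leaving `a (xᵀ P x) + wᵀ W_a w - yᵀ P y` with `y = A x + B w`. Hence the matrix
inequality is a one-step dissipation estimate for `V x = xᵀ P x`. Since `∑ (1 - aᵢ) ≤ N - a`, it
reads `V (ζ (k + 1)) ≤ a V (ζ k) + (N - a)`, and the discrete Grönwall inequality sums the geometric
series.
-/

section BlockMatrices

variable {R ι m : Type*} {p : ι → Type*}

/-- The horizontal concatenation `[B₁ … B_N]` of a family of matrices with the same rows; its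
columns are indexed by pairs of a block and a column of that block. -/
def blockRow (B : ∀ i, Matrix m (p i) R) : Matrix m (Σ i, p i) R :=
  of fun r q => B q.1 r q.2

variable [Fintype ι] [∀ i, Fintype (p i)] [NonUnitalNonAssocSemiring R]

theorem blockRow_mulVec_uncurry (B : ∀ i, Matrix m (p i) R) (v : ∀ i, p i → R) :
    blockRow B *ᵥ Sigma.uncurry v = ∑ i, B i *ᵥ v i := by
  ext r
  simp [blockRow, mulVec, dotProduct, Fintype.sum_sigma, Sigma.uncurry]

theorem uncurry_dotProduct_uncurry (v w : ∀ i, p i → R) :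
    Sigma.uncurry v ⬝ᵥ Sigma.uncurry w = ∑ i, v i ⬝ᵥ w i :=
  Fintype.sum_sigma _

theorem blockDiagonal'_mulVec_uncurry [DecidableEq ι] {m : ι → Type*}
    (M : ∀ i, Matrix (m i) (p i) R) (v : ∀ i, p i → R) :
    blockDiagonal' M *ᵥ Sigma.uncurry v = Sigma.uncurry fun i => M i *ᵥ v i := by
  ext ⟨i, r⟩
  simp only [mulVec, dotProduct, Fintype.sum_sigma, Sigma.uncurry]
  rw [Fintype.sum_eq_single i]
  · simp only [blockDiagonal'_apply_eq]
  · intro j hji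
    simp only [blockDiagonal'_apply_ne M _ _ hji.symm, zero_mul, Finset.sum_const_zero]

end BlockMatrices

section Dissipation

variable {R n q : Type*} [Fintype n] [Fintype q] [CommRing R]

/-- The block matrix `[[aP, AᵀP, 0], [PA, P, PB], [0, BᵀP, W]]` whose positive semidefiniteness
certifies the ellipsoidal bound for `x ↦ A x + B w`, with `w` measured by `W`. -/
def dissipationMatrix (a : R) (P A : Matrix n n R) (B : Matrix n q R) (W : Matrix q q R) :
    Matrix ((n ⊕ n) ⊕ q) ((n ⊕ n) ⊕ q) R :=
  fromBlocks (fromBlocks (a • P) (Aᵀ * P) (P * A) P) (fromRows 0 (P * B)) (fromCols 0 (Bᵀ * P)) W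

theorem dissipationMatrix_quadraticForm (a : R) (P A : Matrix n n R) (B : Matrix n q R)
    (W : Matrix q q R) {x y : n → R} {w : q → R} (hy : y = A *ᵥ x + B *ᵥ w) :
    Sum.elim (Sum.elim x (-y)) w ⬝ᵥ dissipationMatrix a P A B W *ᵥ Sum.elim (Sum.elim x (-y)) w =
      a * (x ⬝ᵥ P *ᵥ x) + w ⬝ᵥ W *ᵥ w - y ⬝ᵥ P *ᵥ y := by
  have upper_blocks : y ⬝ᵥ (P * A) *ᵥ x + y ⬝ᵥ (P * B) *ᵥ w = y ⬝ᵥ P *ᵥ y := by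
    rw [← dotProduct_add, ← mulVec_mulVec, ← mulVec_mulVec, ← mulVec_add, ← hy]
  have lower_blocks : x ⬝ᵥ (Aᵀ * P) *ᵥ y + w ⬝ᵥ (Bᵀ * P) *ᵥ y = y ⬝ᵥ P *ᵥ y := by
    simp only [← mulVec_mulVec, dotProduct_mulVec _ _ᵀ, vecMul_transpose]
    rw [← add_dotProduct, ← hy]
  simp only [dissipationMatrix, fromBlocks_mulVec, fromRows_mulVec, fromCols_mulVec,
    Sum.elim_comp_inl, Sum.elim_comp_inr, ← Sum.elim_add_add, sumElim_dotProduct_sumElim,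
    mulVec_neg, zero_mulVec, dotProduct_add, neg_dotProduct, dotProduct_neg, smul_mulVec,
    dotProduct_smul, smul_eq_mul, dotProduct_zero]
  linear_combination -upper_blocks - lower_blocks

theorem quadraticForm_step_le [PartialOrder R] [IsOrderedRing R] [StarRing R] [TrivialStar R]
    {a : R} {P A : Matrix n n R} {B : Matrix n q R} {W : Matrix q q R}
    (hM : (dissipationMatrix a P A B W).PosSemidef) {x y : n → R} {w : q → R}
    (hy : y = A *ᵥ x + B *ᵥ w) :
    y ⬝ᵥ P *ᵥ y ≤ a * (x ⬝ᵥ P *ᵥ x) + w ⬝ᵥ W *ᵥ w := by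
  rw [← sub_nonneg, ← dissipationMatrix_quadraticForm a P A B W hy]
  simpa only [star_trivial] using
    hM.dotProduct_mulVec_nonneg (Sum.elim (Sum.elim x (-y)) w)

end Dissipation

theorem uncurry_dotProduct_blockDiagonal'_mulVec_le_card_sub {R ι : Type*} {p : ι → Type*}
    [Fintype ι] [DecidableEq ι] [∀ i, Fintype (p i)]
    [CommRing R] [PartialOrder R] [IsOrderedRing R]
    {W : ∀ i, Matrix (p i) (p i) R} {a : R} {c : ι → R} (hc : ∀ i, c i ≤ 1) (hsum : a ≤ ∑ i, c i)
    {w : ∀ i, p i → R} (hw : ∀ i, w i ⬝ᵥ W i *ᵥ w i ≤ 1) :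
    Sigma.uncurry w ⬝ᵥ blockDiagonal' (fun i => (1 - c i) • W i) *ᵥ Sigma.uncurry w ≤
      Fintype.card ι - a :=
  calc
    _ = ∑ i, (1 - c i) * (w i ⬝ᵥ W i *ᵥ w i) := by
      simp only [blockDiagonal'_mulVec_uncurry, uncurry_dotProduct_uncurry, smul_mulVec,
        dotProduct_smul, smul_eq_mul]
    _ ≤ ∑ i, (1 - c i) :=
      Finset.sum_le_sum fun i _ => mul_le_of_le_one_right (sub_nonneg.2 (hc i)) (hw i)
    _ = Fintype.card ι - ∑ i, c i := by simp
    _ ≤ Fintype.card ι - a := sub_le_sub_left hsum _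

section LinearOrderedField

variable {𝕜 : Type*} [Field 𝕜] [LinearOrder 𝕜] [IsStrictOrderedRing 𝕜]

theorem le_pow_mul_add_of_forall_succ_le {u : ℕ → 𝕜} {a b : 𝕜} {k₀ : ℕ} (ha : 0 ≤ a) (ha1 : a ≠ 1)
    (hu : ∀ k ≥ k₀, u (k + 1) ≤ a * u k + b) {k : ℕ} (hk : k₀ ≤ k) :
    u k ≤ a ^ (k - k₀) * u k₀ + b * (1 - a ^ (k - k₀)) / (1 - a) := by
  have geometric_sum :
      ∑ j ∈ Finset.Ico k₀ k, a ^ (k - (j + 1)) = (1 - a ^ (k - k₀)) / (1 - a) := by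
    rw [Finset.sum_Ico_eq_sum_range, ← neg_div_neg_eq, neg_sub, neg_sub, ← geom_sum_eq ha1,
      ← Finset.sum_range_reflect (a ^ ·)]
    exact Finset.sum_congr rfl fun j _ => by congr 1; omega
  calc
    u k ≤ u k₀ * ∏ _i ∈ Finset.Ico k₀ k, a +
        ∑ j ∈ Finset.Ico k₀ k, b * ∏ _i ∈ Finset.Ico (j + 1) k, a :=
      discrete_gronwall_prod_general hu (fun _ _ => ha) hk
    _ = a ^ (k - k₀) * u k₀ + b * (1 - a ^ (k - k₀)) / (1 - a) := by
      simp only [Finset.prod_const, Nat.card_Ico, ← Finset.mul_sum, geometric_sum, mul_comm (u k₀),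
        mul_div_assoc]

theorem ellipsoidal_reachable_set_bound_general [StarRing 𝕜] [TrivialStar 𝕜]
    {n ι : Type*} {p : ι → Type*} [Fintype n] [Fintype ι] [DecidableEq ι] [∀ i, Fintype (p i)]
    {A P : Matrix n n 𝕜} {B : ∀ i, Matrix n (p i) 𝕜} {W : ∀ i, Matrix (p i) (p i) 𝕜}
    {a : 𝕜} (ha : 0 ≤ a) (ha1 : a ≠ 1) {c : ι → 𝕜} (hc : ∀ i, c i ≤ 1) (hsum : a ≤ ∑ i, c i)
    (hM : (dissipationMatrix a P A (blockRow B)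
      (blockDiagonal' fun i => (1 - c i) • W i)).PosSemidef)
    {ζ : ℕ → n → 𝕜} {ω : ℕ → ∀ i, p i → 𝕜} {k₀ : ℕ}
    (hω : ∀ k ≥ k₀, ∀ i, ω k i ⬝ᵥ W i *ᵥ ω k i ≤ 1)
    (hdyn : ∀ k ≥ k₀, ζ (k + 1) = A *ᵥ ζ k + ∑ i, B i *ᵥ ω k i) {k : ℕ} (hk : k₀ ≤ k) :
    ζ k ⬝ᵥ P *ᵥ ζ k ≤ a ^ (k - k₀) * (ζ k₀ ⬝ᵥ P *ᵥ ζ k₀) +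
      (Fintype.card ι - a) * (1 - a ^ (k - k₀)) / (1 - a) := by
  refine le_pow_mul_add_of_forall_succ_le (u := fun k => ζ k ⬝ᵥ P *ᵥ ζ k) ha ha1
    (fun j hj => ?_) hk
  have hstep : ζ (j + 1) = A *ᵥ ζ j + blockRow B *ᵥ Sigma.uncurry (ω j) := by
    rw [hdyn j hj, blockRow_mulVec_uncurry]
  exact (quadraticForm_step_le hM hstep).trans
    (add_le_add_right (uncurry_dotProduct_blockDiagonal'_mulVec_le_card_sub hc hsum (hω j hj)) _)

end LinearOrderedField

/-- **Invariance of the ellipsoidal bound.** Suppose the block LMI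
`[[aP, AᵀP, 0], [PA, P, PB], [0, BᵀP, W_a]] ≥ 0` holds, where `B = [B₁ … B_N]` and
`W_a = diag[(1-a₁)W₁, …, (1-a_N)W_N]`, with `P, Wᵢ` symmetric positive definite,
`a, aᵢ ∈ (0,1)` and `a₁ + ⋯ + a_N ≥ a`. Then any solution of
`ζ(k+1) = A ζ(k) + Σᵢ Bᵢ ωᵢ(k)` with `ωᵢ(k)ᵀ Wᵢ ωᵢ(k) ≤ 1` satisfies
`ζ(k)ᵀ P ζ(k) ≤ a^(k-1) ζ(1)ᵀ P ζ(1) + (N - a)(1 - a^(k-1))/(1 - a)` for `k ≥ 1`. -/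
theorem ellipsoidal_reachable_set_bound
    (n N : ℕ) (hn : 0 < n) (hN : 1 ≤ N)
    (p : Fin N → ℕ) (hp : ∀ i, 0 < p i)
    (A : Matrix (Fin n) (Fin n) ℝ)
    (B : ∀ i : Fin N, Matrix (Fin n) (Fin (p i)) ℝ)
    (W : ∀ i : Fin N, Matrix (Fin (p i)) (Fin (p i)) ℝ)
    (hW : ∀ i, (W i).PosDef)
    (a : ℝ) (ha : a ∈ Set.Ioo (0 : ℝ) 1)
    (aa : Fin N → ℝ) (haa : ∀ i, aa i ∈ Set.Ioo (0 : ℝ) 1)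
    (hsum : a ≤ ∑ i, aa i)
    (P : Matrix (Fin n) (Fin n) ℝ) (hP : P.PosDef)
    (hM : (Matrix.fromBlocks
        (Matrix.fromBlocks (a • P) (Aᵀ * P) (P * A) P)
        (Matrix.fromRows (0 : Matrix (Fin n) (Σ i : Fin N, Fin (p i)) ℝ)
          (P * Matrix.of (fun r (q : Σ i : Fin N, Fin (p i)) => B q.1 r q.2)))
        (Matrix.fromCols (0 : Matrix (Σ i : Fin N, Fin (p i)) (Fin n) ℝ)
          ((Matrix.of (fun r (q : Σ i : Fin N, Fin (p i)) => B q.1 r q.2))ᵀ * P))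
        (Matrix.blockDiagonal' (fun i => (1 - aa i) • W i))).PosSemidef)
    (ζ : ℕ → Fin n → ℝ)
    (ω : ℕ → ∀ i : Fin N, Fin (p i) → ℝ)
    (hω : ∀ k i, (ω k i) ⬝ᵥ (W i *ᵥ ω k i) ≤ 1)
    (hdyn : ∀ k, ζ (k + 1) = A *ᵥ ζ k + ∑ i, B i *ᵥ ω k i) :
    ∀ k, 1 ≤ k →
      (ζ k) ⬝ᵥ (P *ᵥ ζ k) ≤
        a ^ (k - 1) * ((ζ 1) ⬝ᵥ (P *ᵥ ζ 1)) +
          ((N : ℝ) - a) * (1 - a ^ (k - 1)) / (1 - a) := by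
  intro k hk
  simpa only [Fintype.card_fin] using
    ellipsoidal_reachable_set_bound_general ha.1.le ha.2.ne (fun i => (haa i).2.le) hsum hM
      (fun k _ => hω k) (fun k _ => hdyn k) hk
end
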